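/- arXiv:2103.14565 — 11 statements merged into one kernel-verified Lean document; each statement's English description precedes it below -/
import Mathlib

section
/- Let Z be an invertible n×n real matrix with singular value decomposition Z = P G Fᵀ. Then among all n×n real matrices B̃ such that S̃ = I − B̃ᵀ B̃ is positive semidefinite, the trace tr(B̃ Z) attains its maximum value tr(G), and this maximum occurs only for B̃ = F Pᵀ; that is, tr(B̃ Z) ≤ tr(G) for every such B̃, with equality if and only if B̃ = F Pᵀ. -/
open Matrix

lemma col_sq_le {n : ℕ} (C : Matrix (Fin n) (Fin n) ℝ) (hC : (1 - Cᵀ * C).PosSemidef)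
    (i : Fin n) : ∑ k, C k i ^ 2 ≤ 1 := by
  have h := hC.diag_nonneg (i := i)
  simp only [Matrix.sub_apply, Matrix.one_apply_eq, Matrix.mul_apply, Matrix.transpose_apply] at h
  simp only [pow_two]
  linarith

lemma diag_le_one {n : ℕ} (C : Matrix (Fin n) (Fin n) ℝ) (hC : (1 - Cᵀ * C).PosSemidef)
    (i : Fin n) : C i i ≤ 1 := by
  have h := col_sq_le C hC i
  have h2 : C i i ^ 2 ≤ ∑ k, C k i ^ 2 :=
    Finset.single_le_sum (f := fun k => C k i ^ 2) (fun k _ => sq_nonneg _) (Finset.mem_univ i)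
  nlinarith

lemma eq_one_of_diag {n : ℕ} (C : Matrix (Fin n) (Fin n) ℝ) (hC : (1 - Cᵀ * C).PosSemidef)
    (hd : ∀ i, C i i = 1) : C = 1 := by
  ext k i
  by_cases hki : k = i
  · subst hki; simp [hd]
  · rw [Matrix.one_apply_ne hki]
    have h := col_sq_le C hC i
    rw [← Finset.add_sum_erase _ _ (Finset.mem_univ i), hd i] at h
    have h2 : C k i ^ 2 ≤ ∑ k ∈ Finset.univ.erase i, C k i ^ 2 :=
      Finset.single_le_sum (f := fun k => C k i ^ 2) (fun k _ => sq_nonneg _)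
        (Finset.mem_erase.2 ⟨hki, Finset.mem_univ k⟩)
    have h3 : C k i ^ 2 = 0 := le_antisymm (by linarith) (sq_nonneg _)
    exact pow_eq_zero_iff (two_ne_zero) |>.1 h3

/-- Let `Z` be an invertible `n×n` real matrix with singular value
decomposition `Z = P * G * Fᵀ` (with `P`, `F` orthogonal and `G` diagonal with
strictly positive diagonal entries). Then among all matrices `B` with
`1 - Bᵀ * B` positive semidefinite, `trace (B * Z)` attains its maximum value
`trace G`, and the maximum occurs only for `B = F * Pᵀ`. -/
theorem stmt_0 (n : ℕ) (Z P F G : Matrix (Fin n) (Fin n) ℝ)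
    (hZ : IsUnit Z)
    (hP : Pᵀ * P = 1) (hF : Fᵀ * F = 1)
    (g : Fin n → ℝ) (hg : ∀ i, 0 < g i) (hG : G = Matrix.diagonal g)
    (hSVD : Z = P * G * Fᵀ) :
    ((1 - (F * Pᵀ)ᵀ * (F * Pᵀ)).PosSemidef ∧ ((F * Pᵀ) * Z).trace = G.trace) ∧
    ∀ B : Matrix (Fin n) (Fin n) ℝ, (1 - Bᵀ * B).PosSemidef →
      (B * Z).trace ≤ G.trace ∧ ((B * Z).trace = G.trace ↔ B = F * Pᵀ) := by
  have hP' : P * Pᵀ = 1 := mul_eq_one_comm.1 hP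
  have hF' : F * Fᵀ = 1 := mul_eq_one_comm.1 hF
  have htr : ∀ B : Matrix (Fin n) (Fin n) ℝ, (B * Z).trace = ∑ i, (Fᵀ * B * P) i i * g i := by
    intro B
    have : (B * Z).trace = ((Fᵀ * B * P) * G).trace := by
      rw [hSVD, ← Matrix.mul_assoc, Matrix.trace_mul_comm]
      simp only [Matrix.mul_assoc]
    rw [this, hG]
    simp [Matrix.trace, Matrix.mul_diagonal]
  have hGt : G.trace = ∑ i, g i := by rw [hG, Matrix.trace_diagonal]
  have hC0 : Fᵀ * (F * Pᵀ) * P = 1 := by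
    rw [← Matrix.mul_assoc, hF, Matrix.one_mul, hP]
  have hmax : ((F * Pᵀ) * Z).trace = G.trace := by
    rw [htr, hC0, hGt]; simp
  refine ⟨⟨?_, hmax⟩, ?_⟩
  · have : (F * Pᵀ)ᵀ * (F * Pᵀ) = 1 := by
      rw [Matrix.transpose_mul, Matrix.transpose_transpose, Matrix.mul_assoc,
        ← Matrix.mul_assoc Fᵀ, hF, Matrix.one_mul, hP']
    rw [this, sub_self]
    exact Matrix.PosSemidef.zero
  · intro B hB
    have hC : (1 - (Fᵀ * B * P)ᵀ * (Fᵀ * B * P)).PosSemidef := by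
      have h := hB.conjTranspose_mul_mul_same P
      rw [Matrix.conjTranspose_eq_transpose_of_trivial] at h
      convert h using 1
      rw [Matrix.mul_sub, Matrix.sub_mul, Matrix.mul_one, hP]
      congr 1
      simp only [Matrix.transpose_mul, Matrix.transpose_transpose, Matrix.mul_assoc]
      rw [← Matrix.mul_assoc F, hF', Matrix.one_mul]
    have hle : ∀ i ∈ Finset.univ, (Fᵀ * B * P) i i * g i ≤ g i := fun i _ =>
      mul_le_of_le_one_left (hg i).le (diag_le_one _ hC i)
    refine ⟨?_, ?_, ?_⟩
    · rw [htr, hGt]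
      exact Finset.sum_le_sum hle
    · intro h
      rw [htr, hGt, Finset.sum_eq_sum_iff_of_le hle] at h
      have h1 : Fᵀ * B * P = 1 := eq_one_of_diag _ hC fun i =>
        mul_right_cancel₀ (hg i).ne' (by rw [h i (Finset.mem_univ i), one_mul])
      calc B = (F * Fᵀ) * B * (P * Pᵀ) := by rw [hF', hP', Matrix.one_mul, Matrix.mul_one]
        _ = F * (Fᵀ * B * P) * Pᵀ := by simp only [Matrix.mul_assoc]
        _ = F * Pᵀ := by rw [h1, Matrix.mul_one]
    · rintro rfl
      exact hmax
end

section
/- Let Z be an invertible n×n real matrix with singular value decomposition Z = P G Fᵀ. Then for every n×n real matrix B̃ such that I − B̃ᵀ B̃ is positive semidefinite, tr(B̃ Z) ≤ tr(G). -/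
open Matrix

/-- Let `Z` be an invertible `n×n` real matrix with singular value
decomposition `Z = P * G * Fᵀ`. Then for every `n×n` real matrix `B` such that
`1 - Bᵀ * B` is positive semidefinite, `trace (B * Z) ≤ trace G`. -/
theorem stmt_1 (n : ℕ) (Z P F G : Matrix (Fin n) (Fin n) ℝ)
    (hZ : IsUnit Z)
    (hP : Pᵀ * P = 1) (hF : Fᵀ * F = 1)
    (g : Fin n → ℝ) (hg : ∀ i, 0 < g i) (hG : G = Matrix.diagonal g)
    (hSVD : Z = P * G * Fᵀ) :
    ∀ B : Matrix (Fin n) (Fin n) ℝ, (1 - Bᵀ * B).PosSemidef →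
      (B * Z).trace ≤ G.trace := by
  intro B hB
  have hF' : F * Fᵀ = 1 := mul_eq_one_comm.mp hF
  have hC : (1 - (Fᵀ * B * P)ᵀ * (Fᵀ * B * P)).PosSemidef := by
    have h := hB.conjTranspose_mul_mul_same P
    have e : Pᴴ * (1 - Bᵀ * B) * P = 1 - (Fᵀ * B * P)ᵀ * (Fᵀ * B * P) := by
      rw [conjTranspose_eq_transpose_of_trivial, Matrix.mul_sub, Matrix.sub_mul, Matrix.mul_one, hP]
      simp only [transpose_mul, transpose_transpose]
      have : Pᵀ * (Bᵀ * F) * (Fᵀ * B * P) = Pᵀ * Bᵀ * (F * Fᵀ) * B * P := by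
        simp only [Matrix.mul_assoc]
      rw [this, hF', Matrix.mul_one]
      simp only [Matrix.mul_assoc]
    rwa [e] at h
  have ht : (B * Z).trace = (Fᵀ * B * P * G).trace := by
    rw [hSVD, ← Matrix.mul_assoc, Matrix.trace_mul_comm]
    simp only [Matrix.mul_assoc]
  rw [ht, hG]
  generalize Fᵀ * B * P = C at hC
  simp only [Matrix.trace, Matrix.diag_apply, Matrix.mul_diagonal, Matrix.diagonal_apply_eq]
  refine Finset.sum_le_sum fun i _ => ?_
  have h := hC.diag_nonneg (i := i)
  rw [Matrix.sub_apply, Matrix.one_apply_eq, Matrix.mul_apply] at h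
  simp only [Matrix.transpose_apply] at h
  have h2 : C i i * C i i ≤ ∑ j, C j i * C j i :=
    Finset.single_le_sum (f := fun j => C j i * C j i)
      (fun j _ => mul_self_nonneg _) (Finset.mem_univ i)
  have h3 : C i i ≤ 1 := by nlinarith
  nlinarith [hg i]
end

section
/- Let Z = P G Fᵀ with P, F orthogonal n×n matrices and G diagonal. Then for every n×n real matrix B̃, writing S̃ = I − B̃ᵀ B̃, one has tr(B̃ Z)² ≤ (tr(G) − tr(P G Pᵀ S̃)) · tr(G). -/
open Matrix

/-- Let `Z = P * G * Fᵀ` with `P`, `F` orthogonal and `G` diagonal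
(with strictly positive diagonal entries). Then for every matrix `B`, writing
`S̃ = 1 - Bᵀ * B`, one has
`trace (B * Z) ^ 2 ≤ (trace G - trace (P * G * Pᵀ * S̃)) * trace G`. -/
theorem stmt_2 (n : ℕ) (Z P F G : Matrix (Fin n) (Fin n) ℝ)
    (hP : Pᵀ * P = 1) (hF : Fᵀ * F = 1)
    (g : Fin n → ℝ) (hg : ∀ i, 0 < g i) (hG : G = Matrix.diagonal g)
    (hSVD : Z = P * G * Fᵀ) :
    ∀ B : Matrix (Fin n) (Fin n) ℝ,
      (B * Z).trace ^ 2 ≤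
        (G.trace - (P * G * Pᵀ * (1 - Bᵀ * B)).trace) * G.trace := by
  intro B
  subst hG hSVD
  have key : ∀ X Y : Matrix (Fin n) (Fin n) ℝ,
      (X * Matrix.diagonal g * Yᵀ).trace = ∑ p : Fin n × Fin n, X p.1 p.2 * g p.2 * Y p.1 p.2 := by
    intro X Y
    rw [Fintype.sum_prod_type]
    simp only [Matrix.trace, Matrix.diag_apply, Matrix.mul_apply (N := Yᵀ),
      Matrix.mul_diagonal, Matrix.transpose_apply]
  have e1 : (B * (P * Matrix.diagonal g * Fᵀ)).trace
      = ((B * P) * Matrix.diagonal g * Fᵀ).trace := by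
    simp only [Matrix.mul_assoc]
  have e2 : (F * Matrix.diagonal g * Fᵀ).trace = (Matrix.diagonal g).trace := by
    rw [Matrix.trace_mul_comm, ← Matrix.mul_assoc, hF, Matrix.one_mul]
  have e3 : (P * Matrix.diagonal g * Pᵀ).trace = (Matrix.diagonal g).trace := by
    rw [Matrix.trace_mul_comm, ← Matrix.mul_assoc, hP, Matrix.one_mul]
  have e4 : (P * Matrix.diagonal g * Pᵀ * (Bᵀ * B)).trace
      = ((B * P) * Matrix.diagonal g * (B * P)ᵀ).trace := by
    rw [← Matrix.mul_assoc, Matrix.trace_mul_comm, Matrix.transpose_mul]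
    simp only [Matrix.mul_assoc]
  rw [Matrix.mul_sub, Matrix.mul_one, Matrix.trace_sub, e3, sub_sub_cancel, e4, e1, ← e2,
    key, key, key]
  apply Finset.sum_sq_le_sum_mul_sum_of_sq_eq_mul
  · intro p _
    have := mul_nonneg (hg p.2).le (mul_self_nonneg ((B * P) p.1 p.2))
    linarith
  · intro p _
    have := mul_nonneg (hg p.2).le (mul_self_nonneg (F p.1 p.2))
    linarith
  · intro p _
    ring
end

section
/- Let Z be an invertible n×n real matrix with singular value decomposition Z = P G Fᵀ, and let B̃ be an n×n real matrix such that S̃ = I − B̃ᵀ B̃ is positive semidefinite and S̃ ≠ 0. Then |tr(B̃ Z)| ≤ √((tr(G) − tr(P G Pᵀ S̃)) · tr(G)) < tr(G); in particular the maximum of tr(B̃ Z) over the positive semidefinite constraint cannot be attained at any B̃ with I − B̃ᵀ B̃ ≠ 0. -/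
open Matrix

/-- Let `Z` be an invertible `n×n` real matrix with singular value
decomposition `Z = P * G * Fᵀ`, and let `B` be an `n×n` real matrix such that
`S̃ = 1 - Bᵀ * B` is positive semidefinite and nonzero. Then
`|trace (B * Z)| ≤ √((trace G - trace (P * G * Pᵀ * S̃)) * trace G) < trace G`. -/
theorem stmt_4 (n : ℕ) (Z P F G B : Matrix (Fin n) (Fin n) ℝ)
    (hZ : IsUnit Z)
    (hP : Pᵀ * P = 1) (hF : Fᵀ * F = 1)
    (g : Fin n → ℝ) (hg : ∀ i, 0 < g i) (hG : G = Matrix.diagonal g)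
    (hSVD : Z = P * G * Fᵀ)
    (hpsd : (1 - Bᵀ * B).PosSemidef) (hne : (1 - Bᵀ * B) ≠ 0) :
    |(B * Z).trace| ≤
        Real.sqrt ((G.trace - (P * G * Pᵀ * (1 - Bᵀ * B)).trace) * G.trace) ∧
      Real.sqrt ((G.trace - (P * G * Pᵀ * (1 - Bᵀ * B)).trace) * G.trace) <
        G.trace := by
  have hP' : P * Pᵀ = 1 := mul_eq_one_comm.mp hP
  set S := 1 - Bᵀ * B with hS
  set T := Pᵀ * S * P with hT
  have hTpsd : T.PosSemidef := by
    have := hpsd.conjTranspose_mul_mul_same P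
    simpa [hT, Matrix.conjTranspose_eq_transpose_of_trivial] using this
  have htrT : T.trace = S.trace := by
    rw [hT, Matrix.trace_mul_comm, ← Matrix.mul_assoc, hP', Matrix.one_mul]
  have htrS : 0 < T.trace := by
    rw [htrT]
    refine lt_of_le_of_ne hpsd.trace_nonneg fun h => hne ?_
    exact hpsd.trace_eq_zero_iff.mp h.symm
  have hdiag : ∀ i, 0 ≤ T i i := fun i => hTpsd.diag_nonneg
  have hGT : (P * G * Pᵀ * S).trace = ∑ j, g j * T j j := by
    have : (P * G * Pᵀ * S).trace = (G * T).trace := by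
      rw [hT, Matrix.mul_assoc, Matrix.mul_assoc, Matrix.trace_mul_comm, Matrix.mul_assoc]
    rw [this, hG]
    simp [Matrix.trace, Matrix.diagonal_mul]
  have hpos : 0 < ∑ j, g j * T j j := by
    obtain ⟨j, -, hj⟩ := Finset.exists_lt_of_sum_lt (s := Finset.univ)
      (f := fun _ => (0 : ℝ)) (g := fun j => T j j) (by simpa [Matrix.trace] using htrS)
    exact Finset.sum_pos' (fun i _ => mul_nonneg (hg i).le (hdiag i))
      ⟨j, Finset.mem_univ _, mul_pos (hg j) hj⟩
  have htG : G.trace = ∑ j, g j := by rw [hG, Matrix.trace_diagonal]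
  have hGpos : 0 < G.trace := by
    rw [htG]
    by_contra h
    have h0 : ¬ (Finset.univ : Finset (Fin n)).Nonempty := fun hn =>
      h (Finset.sum_pos (fun i _ => hg i) hn)
    rw [Finset.not_nonempty_iff_eq_empty] at h0
    rw [h0] at hpos
    simp at hpos
  constructor
  · set C := B * P with hC
    have hTC : T = 1 - Cᵀ * C := by
      rw [hT, hS, hC, Matrix.mul_sub, Matrix.sub_mul, Matrix.mul_one, hP,
        Matrix.transpose_mul]
      simp only [Matrix.mul_assoc]
    have h1 : G.trace - (P * G * Pᵀ * S).trace = ∑ j, ∑ i, g j * C i j ^ 2 := by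
      rw [hGT, htG, ← Finset.sum_sub_distrib]
      refine Finset.sum_congr rfl fun j _ => ?_
      rw [hTC, Matrix.sub_apply, Matrix.one_apply_eq, Matrix.mul_apply, ← Finset.mul_sum]
      simp only [Matrix.transpose_apply, ← sq]
      ring
    have h2 : G.trace = ∑ j, ∑ i, g j * F i j ^ 2 := by
      rw [htG]
      refine Finset.sum_congr rfl fun j _ => ?_
      have := congrFun (congrFun hF j) j
      rw [Matrix.one_apply_eq, Matrix.mul_apply] at this
      simp only [Matrix.transpose_apply, ← sq] at this
      rw [← Finset.mul_sum, this, mul_one]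
    have h3 : (B * Z).trace = ∑ j, ∑ i, g j * (C i j * F i j) := by
      have : B * Z = C * G * Fᵀ := by rw [hSVD, hC]; simp only [Matrix.mul_assoc]
      rw [this, hG, Matrix.trace, Finset.sum_comm]
      refine Finset.sum_congr rfl fun i _ => ?_
      rw [Matrix.diag_apply, Matrix.mul_apply]
      refine Finset.sum_congr rfl fun j _ => ?_
      rw [Matrix.mul_diagonal, Matrix.transpose_apply]
      ring
    apply Real.abs_le_sqrt
    rw [h1, h3]
    conv_rhs => rw [h2]
    simp only [← Finset.sum_product']
    refine Finset.sum_sq_le_sum_mul_sum_of_sq_eq_mul _ ?_ ?_ ?_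
    · intro x _
      exact mul_nonneg (hg _).le (sq_nonneg _)
    · intro x _
      exact mul_nonneg (hg _).le (sq_nonneg _)
    · intro x _
      ring
  · rw [Real.sqrt_lt' hGpos, hGT, sq]
    exact mul_lt_mul_of_pos_right (by linarith) hGpos
end

section
/- Let Q, R, H and K be as in the Kalman gain setup. Then (I − K H) Q Hᵀ = K R. -/
open Matrix

/-- In the Kalman gain setup (`Q`, `R` symmetric positive
definite, `K = Q Hᵀ (H Q Hᵀ + R)⁻¹`), one has `(I − K H) Q Hᵀ = K R`. -/
theorem stmt_6 (n m : ℕ) (hn : 0 < n) (hm : 0 < m)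
    (Q : Matrix (Fin n) (Fin n) ℝ) (R : Matrix (Fin m) (Fin m) ℝ)
    (H : Matrix (Fin m) (Fin n) ℝ) (K : Matrix (Fin n) (Fin m) ℝ)
    (hQ : Q.PosDef) (hR : R.PosDef)
    (hK : K = Q * Hᵀ * (H * Q * Hᵀ + R)⁻¹) :
    (1 - K * H) * Q * Hᵀ = K * R := by
  have hS : (H * Q * Hᵀ + R).PosDef := by
    have h1 : (H * Q * Hᵀ).PosSemidef := by
      have h := hQ.posSemidef.mul_mul_conjTranspose_same H
      rwa [conjTranspose_eq_transpose_of_trivial] at h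
    exact Matrix.PosDef.posSemidef_add h1 hR
  have hdet : IsUnit (H * Q * Hᵀ + R).det := hS.det_pos.ne'.isUnit
  have hKS : K * (H * Q * Hᵀ + R) = Q * Hᵀ := by
    rw [hK, Matrix.mul_assoc, Matrix.nonsing_inv_mul _ hdet, Matrix.mul_one]
  rw [Matrix.sub_mul, Matrix.sub_mul, Matrix.one_mul, ← hKS, Matrix.mul_add]
  simp only [Matrix.mul_assoc]
  abel
end

section
/- Let Q, R, H and K be as in the Kalman gain setup. Then (Q⁻¹ + Hᵀ R⁻¹ H)⁻¹ Q⁻¹ = I − K H. -/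
open Matrix

/-- In the Kalman gain setup,
`(Q⁻¹ + Hᵀ R⁻¹ H)⁻¹ Q⁻¹ = I − K H`. -/
theorem stmt_7 (n m : ℕ) (hn : 0 < n) (hm : 0 < m)
    (Q : Matrix (Fin n) (Fin n) ℝ) (R : Matrix (Fin m) (Fin m) ℝ)
    (H : Matrix (Fin m) (Fin n) ℝ) (K : Matrix (Fin n) (Fin m) ℝ)
    (hQ : Q.PosDef) (hR : R.PosDef)
    (hK : K = Q * Hᵀ * (H * Q * Hᵀ + R)⁻¹) :
    (Q⁻¹ + Hᵀ * R⁻¹ * H)⁻¹ * Q⁻¹ = 1 - K * H := by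
  have hS : (H * Q * Hᵀ + R).PosDef := by
    have h := hQ.posSemidef.mul_mul_conjTranspose_same H
    rw [conjTranspose_eq_transpose_of_trivial] at h
    exact Matrix.PosDef.posSemidef_add h hR
  have hQd : IsUnit Q.det := (Matrix.isUnit_iff_isUnit_det _).1 hQ.isUnit
  have hRR : R⁻¹⁻¹ = R := Matrix.nonsing_inv_nonsing_inv _ ((Matrix.isUnit_iff_isUnit_det _).1 hR.isUnit)
  have hQQ : Q⁻¹⁻¹ = Q := Matrix.nonsing_inv_nonsing_inv _ hQd
  have key := Matrix.add_mul_mul_inv_eq_sub Q⁻¹ Hᵀ R⁻¹ H hQ.inv.isUnit hR.inv.isUnit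
    (by rw [hRR, hQQ, add_comm]; exact hS.isUnit)
  rw [key, hRR, hQQ, hK, add_comm R, sub_mul, Matrix.mul_nonsing_inv _ hQd,
    Matrix.mul_assoc _ Q Q⁻¹, Matrix.mul_nonsing_inv _ hQd, Matrix.mul_one]
end

section
/- Let Q, R, H and K be as in the Kalman gain setup. Then (Q⁻¹ + Hᵀ R⁻¹ H)⁻¹ Hᵀ R⁻¹ = K. -/
open Matrix

/-- In the Kalman gain setup,
`(Q⁻¹ + Hᵀ R⁻¹ H)⁻¹ Hᵀ R⁻¹ = K`. -/
theorem stmt_8 (n m : ℕ) (hn : 0 < n) (hm : 0 < m)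
    (Q : Matrix (Fin n) (Fin n) ℝ) (R : Matrix (Fin m) (Fin m) ℝ)
    (H : Matrix (Fin m) (Fin n) ℝ) (K : Matrix (Fin n) (Fin m) ℝ)
    (hQ : Q.PosDef) (hR : R.PosDef)
    (hK : K = Q * Hᵀ * (H * Q * Hᵀ + R)⁻¹) :
    (Q⁻¹ + Hᵀ * R⁻¹ * H)⁻¹ * Hᵀ * R⁻¹ = K := by
  have hS : (H * Q * Hᵀ + R).PosDef := by
    have h := hQ.posSemidef.mul_mul_conjTranspose_same H
    rw [conjTranspose_eq_transpose_of_trivial] at h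
    exact Matrix.PosDef.posSemidef_add h hR
  have hA : (Q⁻¹ + Hᵀ * R⁻¹ * H).PosDef := by
    have h := hR.inv.posSemidef.conjTranspose_mul_mul_same H
    rw [conjTranspose_eq_transpose_of_trivial] at h
    exact hQ.inv.add_posSemidef h
  have uQ : IsUnit Q.det := (Matrix.isUnit_iff_isUnit_det _).1 hQ.isUnit
  have uR : IsUnit R.det := (Matrix.isUnit_iff_isUnit_det _).1 hR.isUnit
  have uS := (Matrix.isUnit_iff_isUnit_det _).1 hS.isUnit
  have uA := (Matrix.isUnit_iff_isUnit_det _).1 hA.isUnit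
  have key : (Q⁻¹ + Hᵀ * R⁻¹ * H) * (Q * Hᵀ) = Hᵀ * R⁻¹ * (H * Q * Hᵀ + R) := by
    rw [Matrix.add_mul, Matrix.mul_add, Matrix.nonsing_inv_mul_cancel_left _ _ uQ,
      Matrix.nonsing_inv_mul_cancel_right _ _ uR, add_comm]
    simp only [Matrix.mul_assoc]
  have h1 : Q * Hᵀ = (Q⁻¹ + Hᵀ * R⁻¹ * H)⁻¹ * (Hᵀ * R⁻¹ * (H * Q * Hᵀ + R)) := by
    rw [← key, Matrix.nonsing_inv_mul_cancel_left _ _ uA]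
  rw [hK, h1, ← Matrix.mul_assoc, Matrix.mul_nonsing_inv_cancel_right _ _ uS,
    ← Matrix.mul_assoc]
end

section
/- Let Q, R, H and K be as in the Kalman gain setup. Then (I − K H) Q (K H)ᵀ = K R Kᵀ. Consequently, the choice Bᵗ = I − K H and Sᵗ = (I − K H) Q (K H)ᵀ makes the noise covariance Sᵗ in the linear update x̃ = Bᵗ(x − μ) + μ + K(y − Hμ) + ε̃ equal to the covariance K R Kᵀ of the perturbation term K ε of the stochastic ensemble Kalman filter update. -/
open Matrix

/-- In the Kalman gain setup,
`(I − K H) Q (K H)ᵀ = K R Kᵀ`; i.e. with `Bᵗ = I − K H` and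
`Sᵗ = (I − K H) Q (K H)ᵀ`, the noise covariance `Sᵗ` equals the covariance
`K R Kᵀ` of the perturbation term of the stochastic EnKF update. -/
theorem stmt_9 (n m : ℕ) (hn : 0 < n) (hm : 0 < m)
    (Q : Matrix (Fin n) (Fin n) ℝ) (R : Matrix (Fin m) (Fin m) ℝ)
    (H : Matrix (Fin m) (Fin n) ℝ) (K : Matrix (Fin n) (Fin m) ℝ)
    (hQ : Q.PosDef) (hR : R.PosDef)
    (hK : K = Q * Hᵀ * (H * Q * Hᵀ + R)⁻¹) :
    (1 - K * H) * Q * (K * H)ᵀ = K * R * Kᵀ := by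
  have hS : (H * Q * Hᵀ + R).PosDef := by
    have h := hQ.posSemidef.mul_mul_conjTranspose_same H
    rw [conjTranspose_eq_transpose_of_trivial] at h
    exact Matrix.PosDef.posSemidef_add h hR
  have hU : IsUnit (H * Q * Hᵀ + R).det := (Matrix.isUnit_iff_isUnit_det _).mp hS.isUnit
  have hKS : K * (H * Q * Hᵀ + R) = Q * Hᵀ := by
    rw [hK, Matrix.mul_assoc, Matrix.nonsing_inv_mul _ hU, Matrix.mul_one]
  have key : (1 - K * H) * Q * Hᵀ = K * R := by
    rw [Matrix.sub_mul, Matrix.sub_mul, Matrix.one_mul, ← hKS, Matrix.mul_add]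
    simp only [Matrix.mul_assoc]
    abel
  rw [Matrix.transpose_mul, ← Matrix.mul_assoc, key]
end

section
/- Let Q, R, H and K be as in the Kalman gain setup. Then (I − K H) Q (I − K H)ᵀ + K R Kᵀ = (I − K H) Q; that is, with B = I − K H and S = (I − K H) Q (K H)ᵀ = K R Kᵀ, the constraint B Q Bᵀ + S = (I − K H) Q is satisfied, so the stochastic ensemble Kalman filter update produces samples with the posterior covariance (I − K H) Q. -/
open Matrix

/-- In the Kalman gain setup,
`(I − K H) Q (I − K H)ᵀ + K R Kᵀ = (I − K H) Q`; i.e. with `B = I − K H` and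
`S = K R Kᵀ` the constraint `B Q Bᵀ + S = (I − K H) Q` is satisfied. -/
theorem stmt_10 (n m : ℕ) (hn : 0 < n) (hm : 0 < m)
    (Q : Matrix (Fin n) (Fin n) ℝ) (R : Matrix (Fin m) (Fin m) ℝ)
    (H : Matrix (Fin m) (Fin n) ℝ) (K : Matrix (Fin n) (Fin m) ℝ)
    (hQ : Q.PosDef) (hR : R.PosDef)
    (hK : K = Q * Hᵀ * (H * Q * Hᵀ + R)⁻¹) :
    (1 - K * H) * Q * (1 - K * H)ᵀ + K * R * Kᵀ = (1 - K * H) * Q := by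
  have hS : (H * Q * Hᵀ + R).PosDef := by
    have h := hQ.posSemidef.mul_mul_conjTranspose_same H
    rw [conjTranspose_eq_transpose_of_trivial] at h
    exact Matrix.PosDef.posSemidef_add h hR
  have hdet : IsUnit (H * Q * Hᵀ + R).det := (Matrix.isUnit_iff_isUnit_det _).1 hS.isUnit
  have h1 : K * (H * Q * Hᵀ + R) = Q * Hᵀ := by
    rw [hK, Matrix.mul_assoc, Matrix.nonsing_inv_mul _ hdet, Matrix.mul_one]
  have h2 : K * R = (1 - K * H) * Q * Hᵀ := by
    rw [Matrix.sub_mul, Matrix.sub_mul, Matrix.one_mul, ← h1, Matrix.mul_add]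
    simp only [Matrix.mul_assoc]
    abel
  rw [h2, Matrix.mul_assoc _ Hᵀ, ← Matrix.transpose_mul, ← Matrix.mul_add,
    Matrix.transpose_sub, Matrix.transpose_one, sub_add_cancel, Matrix.mul_one]
end

section
/- Let Q, R, H and K be as in the Kalman gain setup. Then (I − K H) Q = (Q⁻¹ + Hᵀ R⁻¹ H)⁻¹; in particular, the posterior covariance matrix (I − K H) Q is symmetric and positive definite. -/
open Matrix

/-- In the Kalman gain setup,
`(I − K H) Q = (Q⁻¹ + Hᵀ R⁻¹ H)⁻¹`; in particular the posterior covariance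
matrix `(I − K H) Q` is symmetric and positive definite. -/
theorem stmt_11 (n m : ℕ) (hn : 0 < n) (hm : 0 < m)
    (Q : Matrix (Fin n) (Fin n) ℝ) (R : Matrix (Fin m) (Fin m) ℝ)
    (H : Matrix (Fin m) (Fin n) ℝ) (K : Matrix (Fin n) (Fin m) ℝ)
    (hQ : Q.PosDef) (hR : R.PosDef)
    (hK : K = Q * Hᵀ * (H * Q * Hᵀ + R)⁻¹) :
    (1 - K * H) * Q = (Q⁻¹ + Hᵀ * R⁻¹ * H)⁻¹ ∧
      ((1 - K * H) * Q).PosDef := by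
  have hS : (R + H * Q * Hᵀ).PosDef := by
    have h := hQ.posSemidef.mul_mul_conjTranspose_same H
    rw [conjTranspose_eq_transpose_of_trivial] at h
    exact hR.add_posSemidef h
  have hP : (Q⁻¹ + Hᵀ * R⁻¹ * H).PosDef := by
    have h := hR.inv.posSemidef.conjTranspose_mul_mul_same H
    rw [conjTranspose_eq_transpose_of_trivial] at h
    exact hQ.inv.add_posSemidef h
  have hQQ : Q⁻¹⁻¹ = Q := nonsing_inv_nonsing_inv Q ((isUnit_iff_isUnit_det Q).1 hQ.isUnit)
  have hRR : R⁻¹⁻¹ = R := nonsing_inv_nonsing_inv R ((isUnit_iff_isUnit_det R).1 hR.isUnit)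
  have key : (1 - K * H) * Q = (Q⁻¹ + Hᵀ * R⁻¹ * H)⁻¹ := by
    rw [add_mul_mul_inv_eq_sub Q⁻¹ Hᵀ R⁻¹ H hQ.inv.isUnit hR.inv.isUnit
      (by rw [hQQ, hRR]; exact hS.isUnit), hQQ, hRR, hK, add_comm R, Matrix.sub_mul,
      Matrix.one_mul]
  exact ⟨key, key ▸ hP.inv⟩
end

section
/- Let Q, R, H and K be as in the Kalman gain setup, let A be an invertible n×n real matrix, let Q = V D Vᵀ and (I − K H) Q = U Λ Uᵀ with V, U orthogonal and D, Λ diagonal with strictly positive diagonal entries, let Z = Λ^{1/2} Uᵀ Aᵀ A Q V D^{-1/2} have singular value decomposition Z = P G Fᵀ with P, F orthogonal and G diagonal with strictly positive entries, and set B* = U Λ^{1/2} P Fᵀ D^{-1/2} Vᵀ. Then B* Q (B*)ᵀ = (I − K H) Q (that is, the corresponding noise covariance S = (I − K H) Q − B* Q (B*)ᵀ is zero, a square root filter), and for every n×n real matrix B such that (I − K H) Q − B Q Bᵀ is positive semidefinite, tr(A B Q Aᵀ) ≤ tr(A B* Q Aᵀ); that is, B* maximises the objective c(B) = tr(A B Q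 Aᵀ) subject to the positive semidefiniteness constraint. -/
open Matrix

theorem stmt_17_aux {n : ℕ} (Q A V U P F S Ls Li E Ei Bstar : Matrix (Fin n) (Fin n) ℝ)
    (g : Fin n → ℝ) (hg : ∀ i, 0 < g i)
    (hV : Vᵀ * V = 1) (hU : Uᵀ * U = 1) (hP : Pᵀ * P = 1) (hF : Fᵀ * F = 1)
    (hLs : Lsᵀ = Ls) (hLi : Liᵀ = Li) (hE : Eᵀ = E) (hEi : Eiᵀ = Ei)
    (hL1 : Ls * Li = 1) (hE1 : E * Ei = 1)
    (hQ : Q = V * (E * E) * Vᵀ) (hS : S = U * (Ls * Ls) * Uᵀ)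
    (hZ : Ls * Uᵀ * Aᵀ * A * Q * V * Ei = P * Matrix.diagonal g * Fᵀ)
    (hB : Bstar = U * Ls * P * Fᵀ * Ei * Vᵀ) :
    Bstar * Q * Bstarᵀ = S ∧
      ∀ B : Matrix (Fin n) (Fin n) ℝ, (S - B * Q * Bᵀ).PosSemidef →
          (A * B * Q * Aᵀ).trace ≤ (A * Bstar * Q * Aᵀ).trace := by
  have hV' := mul_eq_one_comm.mp hV
  have hU' := mul_eq_one_comm.mp hU
  have hP' := mul_eq_one_comm.mp hP
  have hF' := mul_eq_one_comm.mp hF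
  have hL2 := mul_eq_one_comm.mp hL1
  have hE2 := mul_eq_one_comm.mp hE1
  have key : ∀ {X Y : Matrix (Fin n) (Fin n) ℝ}, X * Y = 1 → ∀ M : Matrix (Fin n) (Fin n) ℝ,
      X * (Y * M) = M := by
    intro X Y h M
    rw [← Matrix.mul_assoc, h, Matrix.one_mul]
  have hFG : F * Matrix.diagonal g = E * (Vᵀ * (Aᵀ * (A * (U * (Ls * P))))) := by
    have h1 := congrArg (fun M => Mᵀ * P) hZ
    simp only [hQ, Matrix.transpose_mul, Matrix.transpose_transpose, Matrix.diagonal_transpose,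
      Matrix.mul_assoc, hLs, hE, hEi, hP, Matrix.mul_one, key hV, key hE1, key hE2] at h1
    exact h1.symm
  have htr : ∀ B : Matrix (Fin n) (Fin n) ℝ, (A * B * Q * Aᵀ).trace =
      ((Pᵀ * Li * Uᵀ * B * V * E * F) * Matrix.diagonal g).trace := by
    intro B
    have h1 : (Pᵀ * Li * Uᵀ * B * V * E * F) * Matrix.diagonal g =
        (Pᵀ * (Li * (Uᵀ * (B * (Q * (Aᵀ * A)))))) * (U * (Ls * P)) := by
      simp only [Matrix.mul_assoc, hFG, hQ]
    rw [h1, Matrix.trace_mul_comm _ (U * (Ls * P))]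
    simp only [Matrix.mul_assoc, key hP', key hL1, key hU']
    rw [Matrix.trace_mul_comm]
    simp only [Matrix.mul_assoc]
  refine ⟨?_, ?_⟩
  · subst hB hS hQ
    simp only [Matrix.transpose_mul, Matrix.transpose_transpose, Matrix.mul_assoc, hLs, hEi,
      key hV, key hE1, key hE2, key hF, key hP']
  · intro B hpsd
    rw [htr B, htr Bstar]
    have hW1 : Pᵀ * Li * Uᵀ * Bstar * V * E * F = 1 := by
      subst hB
      simp only [Matrix.mul_assoc, key hU, key hL2, key hP, key hV, key hE2, hF]
    rw [hW1]
    have h2 := hpsd.mul_mul_conjTranspose_same (Pᵀ * Li * Uᵀ)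
    set W := Pᵀ * Li * Uᵀ * B * V * E * F with hW
    have h3 : (Pᵀ * Li * Uᵀ) * (S - B * Q * Bᵀ) * (Pᵀ * Li * Uᵀ)ᴴ = 1 - W * Wᵀ := by
      rw [Matrix.conjTranspose_eq_transpose_of_trivial, Matrix.mul_sub, Matrix.sub_mul, hW, hS, hQ]
      simp only [Matrix.transpose_mul, Matrix.transpose_transpose, Matrix.mul_assoc, hLi, hE,
        key hU, key hL2, key hL1, hP, key hF']
    rw [h3] at h2
    simp only [Matrix.trace, Matrix.diag, Matrix.mul_diagonal, Matrix.one_apply_eq]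
    refine Finset.sum_le_sum fun i _ => mul_le_mul_of_nonneg_right ?_ (hg i).le
    have h4 := h2.diag_nonneg (i := i)
    rw [Matrix.sub_apply, Matrix.one_apply_eq, Matrix.mul_apply] at h4
    have h5 := Finset.single_le_sum (f := fun j => W i j * Wᵀ j i)
      (fun j _ => mul_self_nonneg (W i j)) (Finset.mem_univ i)
    simp only [Matrix.transpose_apply] at h4 h5
    nlinarith

/-- In the Kalman gain setup, with `A` invertible,
`Q = V D Vᵀ`, `(I − K H) Q = U Λ Uᵀ`, `Z = Λ^{1/2} Uᵀ Aᵀ A Q V D^{-1/2}` with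
singular value decomposition `Z = P G Fᵀ`, and
`B* = U Λ^{1/2} P Fᵀ D^{-1/2} Vᵀ`: then `B* Q (B*)ᵀ = (I − K H) Q` (the noise
covariance is zero, a square root filter), and for every matrix `B` such that
`(I − K H) Q − B Q Bᵀ` is positive semidefinite,
`tr(A B Q Aᵀ) ≤ tr(A B* Q Aᵀ)`. -/
theorem stmt_17 (n m : ℕ) (hn : 0 < n) (hm : 0 < m)
    (Q : Matrix (Fin n) (Fin n) ℝ) (R : Matrix (Fin m) (Fin m) ℝ)
    (H : Matrix (Fin m) (Fin n) ℝ) (K : Matrix (Fin n) (Fin m) ℝ)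
    (hQ : Q.PosDef) (hR : R.PosDef)
    (hK : K = Q * Hᵀ * (H * Q * Hᵀ + R)⁻¹)
    (A : Matrix (Fin n) (Fin n) ℝ) (hA : IsUnit A)
    (V U P F : Matrix (Fin n) (Fin n) ℝ)
    (hV : Vᵀ * V = 1) (hU : Uᵀ * U = 1) (hP : Pᵀ * P = 1) (hF : Fᵀ * F = 1)
    (d l g : Fin n → ℝ) (hd : ∀ i, 0 < d i) (hl : ∀ i, 0 < l i)
    (hg : ∀ i, 0 < g i)
    (hQdec : Q = V * Matrix.diagonal d * Vᵀ)
    (hPdec : (1 - K * H) * Q = U * Matrix.diagonal l * Uᵀ)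
    (hSVD : Matrix.diagonal (fun i => Real.sqrt (l i)) * Uᵀ * Aᵀ * A * Q * V *
        Matrix.diagonal (fun i => (Real.sqrt (d i))⁻¹) =
      P * Matrix.diagonal g * Fᵀ)
    (Bstar : Matrix (Fin n) (Fin n) ℝ)
    (hBstar : Bstar = U * Matrix.diagonal (fun i => Real.sqrt (l i)) * P * Fᵀ *
      Matrix.diagonal (fun i => (Real.sqrt (d i))⁻¹) * Vᵀ) :
    Bstar * Q * Bstarᵀ = (1 - K * H) * Q ∧
      ∀ B : Matrix (Fin n) (Fin n) ℝ,
        ((1 - K * H) * Q - B * Q * Bᵀ).PosSemidef →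
          (A * B * Q * Aᵀ).trace ≤ (A * Bstar * Q * Aᵀ).trace := by
  have hl0 : ∀ i, Real.sqrt (l i) ≠ 0 := fun i => (Real.sqrt_pos.mpr (hl i)).ne'
  have hd0 : ∀ i, Real.sqrt (d i) ≠ 0 := fun i => (Real.sqrt_pos.mpr (hd i)).ne'
  refine stmt_17_aux Q A V U P F _ (Matrix.diagonal fun i => Real.sqrt (l i))
    (Matrix.diagonal fun i => (Real.sqrt (l i))⁻¹) (Matrix.diagonal fun i => Real.sqrt (d i))
    (Matrix.diagonal fun i => (Real.sqrt (d i))⁻¹) Bstar g hg hV hU hP hF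
    (Matrix.diagonal_transpose _) (Matrix.diagonal_transpose _) (Matrix.diagonal_transpose _)
    (Matrix.diagonal_transpose _) ?_ ?_ ?_ ?_ hSVD hBstar
  · simp [Matrix.diagonal_mul_diagonal, hl0]
  · simp [Matrix.diagonal_mul_diagonal, hd0]
  · rw [Matrix.diagonal_mul_diagonal]
    simp only [Real.mul_self_sqrt (hd _).le]
    exact hQdec
  · rw [Matrix.diagonal_mul_diagonal]
    simp only [Real.mul_self_sqrt (hl _).le]
    exact hPdec
end
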